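/- Let G be a non-bipartite graph of order n ≥ 21. If ρ(G) ≥ ρ(K_{⌈(n−2)/2⌉,⌊(n−2)/2⌋} • K₃), then G contains a cycle of length 5, unless G is isomorphic to K_{⌈(n−2)/2⌉,⌊(n−2)/2⌋} • K₃. -/

import Mathlib

open SimpleGraph

noncomputable def specRad {V : Type*} [Fintype V] [DecidableEq V] (G : SimpleGraph V) : ℝ :=
  letI := Classical.decRel G.Adj
  have h : (G.adjMatrix ℝ).IsHermitian := by
    ext i j
    simp [Matrix.conjTranspose_apply, SimpleGraph.adjMatrix_apply, G.adj_comm i j]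
  ⨆ i, h.eigenvalues i

/-- `K_{a,b} • K₃`: the complete bipartite graph `K_{a,b}` with a triangle glued at a
vertex of the part of size `b` (the part `Fin b`), using two new vertices `Fin 2`. -/
def KdotK3 (a b : ℕ) (hb : 0 < b) : SimpleGraph ((Fin a ⊕ Fin b) ⊕ Fin 2) :=
  SimpleGraph.fromRel (fun x y =>
    (∃ i j, x = Sum.inl (Sum.inl i) ∧ y = Sum.inl (Sum.inr j)) ∨
    (x = Sum.inl (Sum.inr ⟨0, hb⟩) ∧ y = Sum.inr 0) ∨
    (x = Sum.inl (Sum.inr ⟨0, hb⟩) ∧ y = Sum.inr 1) ∨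
    (x = Sum.inr 0 ∧ y = Sum.inr 1))

/-!
Let `u` be a vertex where a Perron vector of `G` is largest. Then `ρ(G)²` is at most the number of
walks of length two starting at `u`, so this number exceeds `(n - 2)² / 4`. In a graph without
pentagons the walks returning to the neighbourhood of `u` are few, and two adjacent vertices at
distance two from `u` have a single common neighbour with `u` in total. Counting with these
restrictions, a non-bipartite `G` must be a subgraph of some `K_{t,b} • K₃` on the same vertices:
if `u` lies in no triangle, then `u` belongs to the part of size `t` and the triangle hangs off a
neighbour of `u`; otherwise the triangle is glued at `u`. Perron's comparison of eigenvalues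
reduces the theorem to these graphs, whose spectral radius `r` is governed by
`(r² - t b) (r - 2) (r + 1) = 2 t`, and the balanced one wins.
-/

open Finset Matrix

/-! ### Nonnegative matrices and Perron vectors -/

section NonnegMatrix

variable {ι : Type*} [Fintype ι] {A : Matrix ι ι ℝ}

open scoped Pointwise in
theorem posSemidef_iSup_eigenvalues_smul_one_sub [DecidableEq ι] (hA : A.IsHermitian) :
    ((⨆ i, hA.eigenvalues i) • (1 : Matrix ι ι ℝ) - A).PosSemidef := by
  set r := ⨆ i, hA.eigenvalues i
  have hermitian : (r • (1 : Matrix ι ι ℝ) - A).IsHermitian :=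
    (isHermitian_one.smul (IsSelfAdjoint.all r)).sub hA
  rw [hermitian.posSemidef_iff_eigenvalues_nonneg]
  intro i
  have mem : hermitian.eigenvalues i ∈ ({r} : Set ℝ) - Set.range hA.eigenvalues := by
    rw [← hA.spectrum_real_eq_range_eigenvalues, spectrum.singleton_sub_eq,
      Algebra.algebraMap_eq_smul_one]
    exact hermitian.eigenvalues_mem_spectrum_real i
  obtain ⟨_, rfl, _, ⟨j, rfl⟩, eq⟩ := mem
  have := le_ciSup (Set.finite_range hA.eigenvalues).bddAbove j
  simpa only [Pi.zero_apply, ← eq, sub_nonneg] using this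

theorem dotProduct_mulVec_le_abs (hA : ∀ i j, 0 ≤ A i j) (z : ι → ℝ) :
    z ⬝ᵥ A *ᵥ z ≤ |z| ⬝ᵥ A *ᵥ |z| := by
  simp only [dotProduct, mulVec, mul_sum, Pi.abs_apply]
  refine sum_le_sum fun i _ => sum_le_sum fun j _ => ?_
  calc z i * (A i j * z j) ≤ |z i * (A i j * z j)| := le_abs_self _
    _ = |z i| * (A i j * |z j|) := by rw [abs_mul, abs_mul, abs_of_nonneg (hA i j)]

-- If `z` is a top eigenvector, then `|z|` maximises the Rayleigh quotient as well.
theorem exists_nonneg_eigenvector_iSup_eigenvalues [DecidableEq ι] [Nonempty ι]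
    (hA : A.IsHermitian) (hA0 : ∀ i j, 0 ≤ A i j) :
    ∃ x : ι → ℝ, 0 ≤ x ∧ x ≠ 0 ∧ A *ᵥ x = (⨆ i, hA.eigenvalues i) • x := by
  have psd := posSemidef_iSup_eigenvalues_smul_one_sub hA
  obtain ⟨k, hk⟩ : ∃ k, hA.eigenvalues k = ⨆ i, hA.eigenvalues i := exists_eq_ciSup_of_finite
  set r := ⨆ i, hA.eigenvalues i
  set z : ι → ℝ := (hA.eigenvectorBasis k).ofLp
  have z_ne_zero : z ≠ 0 := fun h =>
    hA.eigenvectorBasis.orthonormal.ne_zero k (by ext i; exact congrFun h i)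
  have Az : A *ᵥ z = r • z := hk ▸ hA.mulVec_eigenvectorBasis k
  have abs_sq : |z| ⬝ᵥ |z| = z ⬝ᵥ z := by simp [dotProduct]
  have quadratic_form (y : ι → ℝ) : y ⬝ᵥ (r • 1 - A) *ᵥ y = r * (y ⬝ᵥ y) - y ⬝ᵥ A *ᵥ y := by
    rw [sub_mulVec, smul_mulVec, one_mulVec, dotProduct_sub, dotProduct_smul, smul_eq_mul]
  have form_abs : |z| ⬝ᵥ (r • 1 - A) *ᵥ |z| = 0 := by
    refine le_antisymm ?_ (psd.dotProduct_mulVec_nonneg _)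
    have := dotProduct_mulVec_le_abs hA0 z
    rw [Az, dotProduct_smul, smul_eq_mul] at this
    rw [quadratic_form, abs_sq]
    linarith
  refine ⟨|z|, abs_nonneg z, by simpa [funext_iff] using z_ne_zero, ?_⟩
  have kernel := (psd.dotProduct_mulVec_zero_iff |z|).mp form_abs
  rw [sub_mulVec, smul_mulVec, one_mulVec] at kernel
  exact (sub_eq_zero.mp kernel).symm

theorem exists_eigenvalue_le_row_sum (hA : ∀ i j, 0 ≤ A i j) {x : ι → ℝ} (hx : 0 ≤ x)
    (hx0 : x ≠ 0) {r : ℝ} (hAx : A *ᵥ x = r • x) : ∃ i, r ≤ ∑ j, A i j := by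
  obtain ⟨k, hk⟩ := Function.ne_iff.mp hx0
  obtain ⟨i, -, hi⟩ := exists_max_image univ x ⟨k, mem_univ k⟩
  have xi_pos : 0 < x i := ((hx k).lt_of_ne' hk).trans_le (hi k (mem_univ k))
  refine ⟨i, le_of_mul_le_mul_right ?_ xi_pos⟩
  calc r * x i = ∑ j, A i j * x j := (congrFun hAx i).symm
    _ ≤ ∑ j, A i j * x i := by gcongr with j hj; exacts [hA i j, hi j hj]
    _ = (∑ j, A i j) * x i := (sum_mul ..).symm

end NonnegMatrix

theorem neighborFinset_subset_of_le {V : Type*} {G K : SimpleGraph V} (hGK : G ≤ K) (v : V)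
    [Fintype (G.neighborSet v)] [Fintype (K.neighborSet v)] :
    G.neighborFinset v ⊆ K.neighborFinset v := fun w => by
  simpa only [mem_neighborFinset] using @hGK v w

open Classical in
/-- `x` is a nonnegative, nonzero eigenvector of the adjacency matrix of `G` for the eigenvalue
`r`. When `G` is disconnected, `r` may be smaller than the spectral radius of `G`. -/
structure IsPerronVector {V : Type*} [Fintype V] (G : SimpleGraph V) (r : ℝ) (x : V → ℝ) :
    Prop where
  nonneg : 0 ≤ x
  ne_zero : x ≠ 0
  mulVec_eq : G.adjMatrix ℝ *ᵥ x = r • x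

theorem exists_isPerronVector_specRad {V : Type*} [Fintype V] [DecidableEq V] [Nonempty V]
    (G : SimpleGraph V) : ∃ x, IsPerronVector G (specRad G) x := by
  classical
  obtain ⟨x, nonneg, ne_zero, mulVec_eq⟩ := exists_nonneg_eigenvector_iSup_eigenvalues
    (G.isHermitian_adjMatrix ℝ) fun v w => by rw [adjMatrix_apply]; positivity
  exact ⟨x, nonneg, ne_zero, by unfold specRad; convert mulVec_eq⟩

namespace IsPerronVector

variable {V W : Type*} [Fintype V] [Fintype W] {G K : SimpleGraph V} {r s : ℝ} {x y : V → ℝ}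

theorem sum_ite_adj [DecidableRel G.Adj] (hx : IsPerronVector G r x) (v : V) :
    ∑ w, (if G.Adj v w then x w else 0) = r * x v := by
  have := congrFun hx.mulVec_eq v
  simp only [mulVec, dotProduct, adjMatrix_apply, ite_mul, one_mul, zero_mul, Pi.smul_apply,
    smul_eq_mul] at this
  convert this

theorem eq_zero_of_adj (hx : IsPerronVector G r x) {v w : V} (h : G.Adj v w) (hv : x v = 0) :
    x w = 0 := by
  classical
  have sum_eq := hx.sum_ite_adj v
  rw [hv, mul_zero, sum_eq_zero_iff_of_nonneg fun w _ => by split_ifs; exacts [hx.nonneg w, le_rfl]]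
    at sum_eq
  simpa only [h, if_true] using sum_eq w (mem_univ w)

theorem pos (hx : IsPerronVector G r x) (hG : G.Preconnected) (v : V) : 0 < x v := by
  refine (hx.nonneg v).lt_of_ne' fun hv => hx.ne_zero (funext fun w => ?_)
  obtain ⟨p⟩ := hG v w
  induction p with
  | nil => exact hv
  | cons h _ ih => exact ih (hx.eq_zero_of_adj h hv)

theorem comap_equiv {H : SimpleGraph W} {z : W → ℝ} (hz : IsPerronVector H r z) (e : V ≃ W) :
    IsPerronVector (H.comap e) r (z ∘ e) where
  nonneg v := hz.nonneg (e v)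
  ne_zero h := hz.ne_zero (funext fun w => by simpa using congrFun h (e.symm w))
  mulVec_eq := by
    classical
    ext v
    simpa [mulVec, dotProduct, adjMatrix_apply] using
      (e.sum_comp fun w => if H.Adj (e v) w then z w else 0).trans (hz.sum_ite_adj (e v))

open Classical in
theorem smul_le_adjMatrix_mulVec (hx : IsPerronVector G r x) (hGK : G ≤ K) :
    r • x ≤ K.adjMatrix ℝ *ᵥ x := by
  rw [← hx.mulVec_eq]
  intro v
  simp only [adjMatrix_mulVec_apply]
  exact sum_le_sum_of_subset_of_nonneg (neighborFinset_subset_of_le hGK v) fun w _ _ => hx.nonneg w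

open Classical in
theorem dotProduct_adjMatrix_mulVec (hy : IsPerronVector K s y) (x : V → ℝ) :
    y ⬝ᵥ K.adjMatrix ℝ *ᵥ x = s * (y ⬝ᵥ x) := by
  rw [dotProduct_mulVec, ← mulVec_transpose, transpose_adjMatrix, hy.mulVec_eq, smul_dotProduct,
    smul_eq_mul]

theorem le_of_le (hx : IsPerronVector G r x) (hy : IsPerronVector K s y) (hK : K.Preconnected)
    (hGK : G ≤ K) : r ≤ s := by
  classical
  have yx_pos : 0 < y ⬝ᵥ x := by
    obtain ⟨v, hv⟩ := Function.ne_iff.mp hx.ne_zero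
    exact sum_pos' (fun w _ => mul_nonneg (hy.nonneg w) (hx.nonneg w))
      ⟨v, mem_univ v, mul_pos (hy.pos hK v) ((hx.nonneg v).lt_of_ne' hv)⟩
  refine le_of_mul_le_mul_right ?_ yx_pos
  calc r * (y ⬝ᵥ x) = y ⬝ᵥ r • x := by rw [dotProduct_smul, smul_eq_mul]
    _ ≤ y ⬝ᵥ K.adjMatrix ℝ *ᵥ x :=
      dotProduct_le_dotProduct_of_nonneg_left (hx.smul_le_adjMatrix_mulVec hGK) hy.nonneg
    _ = s * (y ⬝ᵥ x) := hy.dotProduct_adjMatrix_mulVec x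

theorem mono_of_eigenvalue_eq (hx : IsPerronVector G r x) (hy : IsPerronVector K r y)
    (hK : K.Preconnected) (hGK : G ≤ K) : IsPerronVector K r x := by
  classical
  refine ⟨hx.nonneg, hx.ne_zero, ?_⟩
  have terms_le (v : V) : y v * (r • x) v ≤ y v * (K.adjMatrix ℝ *ᵥ x) v :=
    mul_le_mul_of_nonneg_left (hx.smul_le_adjMatrix_mulVec hGK v) (hy.nonneg v)
  have sums_eq : y ⬝ᵥ r • x = y ⬝ᵥ K.adjMatrix ℝ *ᵥ x := by
    rw [hy.dotProduct_adjMatrix_mulVec, dotProduct_smul, smul_eq_mul]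
  ext v
  have terms_eq := (sum_eq_sum_iff_of_le fun v _ => terms_le v).mp sums_eq v (mem_univ v)
  exact (mul_left_cancel₀ (hy.pos hK v).ne' terms_eq).symm

theorem eq_of_le (hx : IsPerronVector G r x) (hy : IsPerronVector K r y) (hK : K.Preconnected)
    (hGK : G ≤ K) : G = K := by
  classical
  have hxK := hx.mono_of_eigenvalue_eq hy hK hGK
  refine le_antisymm hGK fun v w hKvw => ?_
  by_contra hGvw
  have sums_lt : (G.adjMatrix ℝ *ᵥ x) v < (K.adjMatrix ℝ *ᵥ x) v := by
    simp only [adjMatrix_mulVec_apply]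
    exact sum_lt_sum_of_subset (neighborFinset_subset_of_le hGK v) (by simpa using hKvw)
      (by simpa using hGvw) (hxK.pos hK w) fun w _ _ => hx.nonneg w
  exact sums_lt.ne (by rw [hx.mulVec_eq, hxK.mulVec_eq])

end IsPerronVector

/-! ### The spectral radius of `K_{a,b} • K₃` -/

namespace KdotK3

open Sum

variable {a b : ℕ} {hb : 0 < b}

@[simp]
theorem adj_left_right (i : Fin a) (j : Fin b) :
    (KdotK3 a b hb).Adj (inl (inl i)) (inl (inr j)) := by
  simp [KdotK3]

@[simp]
theorem adj_right_left (j : Fin b) (i : Fin a) :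
    (KdotK3 a b hb).Adj (inl (inr j)) (inl (inl i)) :=
  (adj_left_right i j).symm

@[simp]
theorem not_adj_left_left (i j : Fin a) : ¬ (KdotK3 a b hb).Adj (inl (inl i)) (inl (inl j)) := by
  simp [KdotK3]

@[simp]
theorem not_adj_right_right (i j : Fin b) :
    ¬ (KdotK3 a b hb).Adj (inl (inr i)) (inl (inr j)) := by
  simp [KdotK3]

@[simp]
theorem not_adj_left_tip (i : Fin a) (k : Fin 2) :
    ¬ (KdotK3 a b hb).Adj (inl (inl i)) (inr k) := by
  simp [KdotK3]

@[simp]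
theorem not_adj_tip_left (k : Fin 2) (i : Fin a) :
    ¬ (KdotK3 a b hb).Adj (inr k) (inl (inl i)) := fun h => not_adj_left_tip i k h.symm

@[simp]
theorem adj_right_tip_iff (j : Fin b) (k : Fin 2) :
    (KdotK3 a b hb).Adj (inl (inr j)) (inr k) ↔ j = ⟨0, hb⟩ := by
  fin_cases k <;> simp [KdotK3]

@[simp]
theorem adj_tip_right_iff (k : Fin 2) (j : Fin b) :
    (KdotK3 a b hb).Adj (inr k) (inl (inr j)) ↔ j = ⟨0, hb⟩ := by
  rw [adj_comm, adj_right_tip_iff]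

@[simp]
theorem adj_tip_tip_iff (k l : Fin 2) : (KdotK3 a b hb).Adj (inr k) (inr l) ↔ k ≠ l := by
  fin_cases k <;> fin_cases l <;> simp [KdotK3]

theorem preconnected (ha : 0 < a) : (KdotK3 a b hb).Preconnected := by
  have reachable_hub : ∀ v, (KdotK3 a b hb).Reachable v (inl (inr ⟨0, hb⟩)) := by
    rintro ((i | j) | k)
    · exact (adj_left_right i _).reachable
    · exact (adj_right_left j ⟨0, ha⟩).reachable.trans (adj_left_right _ _).reachable
    · exact ((adj_tip_right_iff k _).mpr rfl).reachable
  exact fun u v => (reachable_hub u).trans (reachable_hub v).symm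

-- `S`, `R` and `c` are the sums of a Perron vector over the part of size `a`, the part of size `b`
-- and the two tips of the triangle; `g` is its entry at the glued vertex.
theorem exists_quotient_eigenvector (ha : 0 < a) :
    ∃ S R g c : ℝ, 0 < S ∧ 0 < R ∧ 0 < g ∧ 0 < c ∧
      a * R = specRad (KdotK3 a b hb) * S ∧ b * S + c = specRad (KdotK3 a b hb) * R ∧
      S + c = specRad (KdotK3 a b hb) * g ∧ 2 * g + c = specRad (KdotK3 a b hb) * c := by
  classical
  have : Nonempty (Fin a) := ⟨⟨0, ha⟩⟩
  have : Nonempty (Fin b) := ⟨⟨0, hb⟩⟩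
  obtain ⟨y, hy⟩ := exists_isPerronVector_specRad (KdotK3 a b hb)
  set r := specRad (KdotK3 a b hb)
  have y_pos := hy.pos (preconnected ha)
  set S := ∑ i : Fin a, y (inl (inl i)) with hS
  set R := ∑ j : Fin b, y (inl (inr j)) with hR
  set c := y (inr 0) + y (inr 1) with hc
  have eq_left (i : Fin a) : R = r * y (inl (inl i)) := by
    simpa [Fintype.sum_sum_type] using hy.sum_ite_adj (inl (inl i))
  have eq_right (j : Fin b) : S + (if j = ⟨0, hb⟩ then c else 0) = r * y (inl (inr j)) := by
    rw [← hy.sum_ite_adj (inl (inr j))]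
    split_ifs with hj <;> simp [Fintype.sum_sum_type, hj, hS, hc]
  have eq_tip₀ : y (inl (inr ⟨0, hb⟩)) + y (inr 1) = r * y (inr 0) := by
    simpa [Fintype.sum_sum_type] using hy.sum_ite_adj (inr 0)
  have eq_tip₁ : y (inl (inr ⟨0, hb⟩)) + y (inr 0) = r * y (inr 1) := by
    simpa [Fintype.sum_sum_type] using hy.sum_ite_adj (inr 1)
  refine ⟨S, R, y (inl (inr ⟨0, hb⟩)), c, sum_pos (fun i _ => y_pos _) univ_nonempty,
    sum_pos (fun j _ => y_pos _) univ_nonempty, y_pos _, add_pos (y_pos _) (y_pos _), ?_, ?_, ?_,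
    by linarith⟩
  · rw [hS, mul_sum _ _ r, ← sum_congr rfl fun i _ => eq_left i]
    simp
  · rw [hR, mul_sum _ _ r, ← sum_congr rfl fun j _ => eq_right j, sum_add_distrib]
    simp
  · simpa using eq_right ⟨0, hb⟩

theorem one_lt_specRad (ha : 0 < a) : 1 < specRad (KdotK3 a b hb) := by
  obtain ⟨S, R, g, c, -, -, g_pos, c_pos, -, -, -, eq_tips⟩ :=
    exists_quotient_eigenvector (hb := hb) ha
  refine lt_of_mul_lt_mul_right ?_ c_pos.le
  linarith

theorem mul_lt_specRad_sq (ha : 0 < a) : (a * b : ℝ) < specRad (KdotK3 a b hb) ^ 2 := by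
  have r_pos := one_pos.trans (one_lt_specRad (hb := hb) ha)
  obtain ⟨S, R, g, c, -, R_pos, -, c_pos, eq_left, eq_right, -, -⟩ :=
    exists_quotient_eigenvector (hb := hb) ha
  set r := specRad (KdotK3 a b hb)
  refine lt_of_mul_lt_mul_right ?_ R_pos.le
  calc a * b * R = b * (a * R) := by ring
    _ < b * (a * R) + r * c := lt_add_of_pos_right _ (mul_pos r_pos c_pos)
    _ = r ^ 2 * R := by rw [eq_left]; linear_combination r * eq_right

theorem specRad_equation (ha : 0 < a) :
    (specRad (KdotK3 a b hb) ^ 2 - a * b) *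
      ((specRad (KdotK3 a b hb) - 2) * (specRad (KdotK3 a b hb) + 1)) = 2 * a := by
  have one_lt := one_lt_specRad (hb := hb) ha
  obtain ⟨S, R, g, c, -, R_pos, -, -, eq_left, eq_right, eq_glued, eq_tips⟩ :=
    exists_quotient_eigenvector (hb := hb) ha
  set r := specRad (KdotK3 a b hb)
  have eliminate_S_c : (r ^ 2 - a * b) * R * (r - 1) = 2 * r * g := by
    linear_combination (1 - r) * (r * eq_right + b * eq_left) - r * eq_tips
  have eliminate_S_R : r * ((r - 2) * (r + 1)) * g = a * (r - 1) * R := by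
    linear_combination (1 - r) * (r * eq_glued + eq_left) - r * eq_tips
  refine mul_right_cancel₀ (mul_pos R_pos (sub_pos.mpr one_lt)).ne' ?_
  linear_combination (r - 2) * (r + 1) * eliminate_S_c + 2 * eliminate_S_R

theorem eq_of_specRad_le {t c : ℕ} {hc : 0 < c} (hb3 : 3 ≤ b) (hba : b ≤ a) (hab : a ≤ b + 1)
    (ht : 0 < t) (hsum : t + c = a + b)
    (hρ : specRad (KdotK3 a b hb) ≤ specRad (KdotK3 t c hc)) : t = a := by
  have ρ_sq := mul_lt_specRad_sq (a := a) (hb := hb) (by omega)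
  have ρ_eq := specRad_equation (a := a) (hb := hb) (by omega)
  have one_lt_ρ := one_lt_specRad (a := a) (hb := hb) (by omega)
  have σ_eq := specRad_equation (hb := hc) ht
  set ρ := specRad (KdotK3 a b hb)
  set σ := specRad (KdotK3 t c hc)
  have hb3' : (3 : ℝ) ≤ b := mod_cast hb3
  have b_lt_ρ : b < ρ := by
    have : (b : ℝ) ≤ a := mod_cast hba
    nlinarith
  have factor_pos : 0 < (ρ - 2) * (ρ + 1) := by nlinarith
  have factor_mono : (ρ - 2) * (ρ + 1) ≤ (σ - 2) * (σ + 1) := by nlinarith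
  have lower : 2 * (a : ℝ) ≤ (σ ^ 2 - a * b) * ((σ - 2) * (σ + 1)) := by
    rw [← ρ_eq]
    gcongr
    nlinarith
  have product_gap : (a * b : ℝ) - t * c = (t - a) * (t - b) := by
    have : (t + c : ℝ) = a + b := mod_cast hsum
    linear_combination (-t : ℝ) * this
  have gap_le : 2 * (a : ℝ) + (t - a) * (t - b) * ((σ - 2) * (σ + 1)) ≤ 2 * t := by
    rw [← product_gap, ← σ_eq]
    linarith
  by_contra t_ne_a
  obtain rfl | t_lt_or_gt : t = b ∨ (t < b ∨ a < t) := by omega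
  · have : (a : ℝ) ≤ t := by linarith
    exact t_ne_a (le_antisymm hba (mod_cast this))
  have one_le_gap : (1 : ℝ) ≤ (t - a) * (t - b) := by
    have : (1 : ℤ) ≤ (t - a) * (t - b) := by obtain h | h := t_lt_or_gt <;> nlinarith
    exact_mod_cast this
  have : (t : ℝ) + 1 ≤ a + b := mod_cast by omega
  nlinarith

end KdotK3

/-! ### Spanning subgraphs of `K_{t,b} • K₃` -/

theorem exists_equiv_fin_apply_zero {α : Type*} {s : Finset α} {g : α} (hg : g ∈ s) :
    ∃ (hs : 0 < #s) (e : Fin #s ≃ s), e ⟨0, hs⟩ = ⟨g, hg⟩ :=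
  have hs := card_pos.mpr ⟨g, hg⟩
  ⟨hs, (Equiv.swap ⟨0, hs⟩ (s.equivFin ⟨g, hg⟩)).trans s.equivFin.symm, by simp⟩

/-- `G` is a spanning subgraph of a copy of `K_{t,b} • K₃` whose part of size `t` is `T`, whose
triangle is `g p q`, and whose part of size `b` consists of `g` and all remaining vertices. -/
structure IsSubKdotK3 {V : Type*} (G : SimpleGraph V) (T : Finset V) (g p q : V) : Prop where
  nonempty : T.Nonempty
  hub_notMem : g ∉ T
  tip₁_notMem : p ∉ T
  tip₂_notMem : q ∉ T
  hub_ne_tip₁ : g ≠ p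
  hub_ne_tip₂ : g ≠ q
  tip₁_ne_tip₂ : p ≠ q
  not_adj : ∀ v ∈ T, ∀ w ∈ T, ¬ G.Adj v w
  not_adj_tip₁ : ∀ v ∈ T, ¬ G.Adj v p
  not_adj_tip₂ : ∀ v ∈ T, ¬ G.Adj v q
  eq_of_adj : ∀ v ∉ T, ∀ w ∉ T, G.Adj v w → v = g ∨ v = p ∨ v = q

namespace IsSubKdotK3

variable {V : Type*} {G : SimpleGraph V} {T : Finset V} {g p q : V}

theorem exists_labelling [Finite V] (h : IsSubKdotK3 G T g p q) :
    ∃ (b : ℕ) (hb : 0 < b) (f : (Fin #T ⊕ Fin b) ⊕ Fin 2 ≃ V),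
      (∀ i, f (.inl (.inl i)) ∈ T) ∧ (∀ j, f (.inl (.inr j)) ∉ T) ∧
      f (.inl (.inr ⟨0, hb⟩)) = g ∧ f (.inr 0) = p ∧ f (.inr 1) = q := by
  classical
  cases nonempty_fintype V
  let B : Finset V := {v | v ∉ T ∧ v ≠ p ∧ v ≠ q}
  have mem_B (v : V) : v ∈ B ↔ v ∉ T ∧ v ≠ p ∧ v ≠ q := by simp [B]
  obtain ⟨hb, eB, eB_zero⟩ := exists_equiv_fin_apply_zero (s := B) (g := g)
    ((mem_B g).mpr ⟨h.hub_notMem, h.hub_ne_tip₁, h.hub_ne_tip₂⟩)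
  let eT := T.equivFin.symm
  have eT_mem (i : Fin #T) : (eT i : V) ∈ T := (eT i).2
  have eB_mem (j : Fin #B) : (eB j : V) ∉ T ∧ (eB j : V) ≠ p ∧ (eB j : V) ≠ q :=
    (mem_B _).mp (eB j).2
  let f : (Fin #T ⊕ Fin #B) ⊕ Fin 2 → V :=
    Sum.elim (Sum.elim (fun i => eT i) fun j => eB j) ![p, q]
  have f_injective : f.Injective := by
    refine ((Subtype.val_injective.comp eT.injective).sumElim
      (Subtype.val_injective.comp eB.injective) fun i j => ?_).sumElim ?_ ?_
    · exact ne_of_mem_of_not_mem (eT_mem i) (eB_mem j).1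
    · simp [Function.Injective, Fin.forall_fin_two, h.tip₁_ne_tip₂, h.tip₁_ne_tip₂.symm]
    · simp only [Sum.forall, Fin.forall_fin_two]
      exact ⟨fun i => ⟨ne_of_mem_of_not_mem (eT_mem i) h.tip₁_notMem,
        ne_of_mem_of_not_mem (eT_mem i) h.tip₂_notMem⟩, fun j => (eB_mem j).2⟩
  have f_surjective : f.Surjective := fun v => by
    by_cases hT : v ∈ T
    · exact ⟨.inl (.inl (eT.symm ⟨v, hT⟩)), by simp [f]⟩
    obtain rfl | hp := eq_or_ne v p
    · exact ⟨.inr 0, rfl⟩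
    obtain rfl | hq := eq_or_ne v q
    · exact ⟨.inr 1, rfl⟩
    · exact ⟨.inl (.inr (eB.symm ⟨v, (mem_B v).mpr ⟨hT, hp, hq⟩⟩)), by simp [f]⟩
  exact ⟨#B, hb, .ofBijective f ⟨f_injective, f_surjective⟩, eT_mem, fun j => (eB_mem j).1,
    congrArg Subtype.val eB_zero, rfl, rfl⟩

theorem exists_equiv_comap_le [Finite V] (h : IsSubKdotK3 G T g p q) :
    ∃ (t b : ℕ) (hb : 0 < b) (f : (Fin t ⊕ Fin b) ⊕ Fin 2 ≃ V),
      0 < t ∧ G.comap f ≤ KdotK3 t b hb := by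
  obtain ⟨b, hb, f, f_left, f_right, f_hub, f_tip₁, f_tip₂⟩ := h.exists_labelling
  refine ⟨#T, b, hb, f, card_pos.mpr h.nonempty, ?_⟩
  have not_adj_left_tip (i : Fin #T) (k : Fin 2) :
      ¬ G.Adj (f (.inl (.inl i))) (f (.inr k)) := by
    fin_cases k
    exacts [f_tip₁ ▸ h.not_adj_tip₁ _ (f_left i), f_tip₂ ▸ h.not_adj_tip₂ _ (f_left i)]
  have tip_notMem (k : Fin 2) : f (.inr k) ∉ T := by
    fin_cases k
    exacts [f_tip₁ ▸ h.tip₁_notMem, f_tip₂ ▸ h.tip₂_notMem]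
  have eq_hub (j : Fin b) {w : V} (hw : w ∉ T) (hjw : G.Adj (f (.inl (.inr j))) w) :
      j = ⟨0, hb⟩ := by
    simpa [← f_hub, ← f_tip₁, ← f_tip₂] using h.eq_of_adj _ (f_right j) w hw hjw
  rintro ((i | j) | k) ((i' | j') | k') hadj <;> simp only [comap_adj] at hadj
  · exact (h.not_adj _ (f_left i) _ (f_left i') hadj).elim
  · exact KdotK3.adj_left_right i j'
  · exact (not_adj_left_tip i k' hadj).elim
  · exact KdotK3.adj_right_left j i'
  · refine (hadj.ne ?_).elim
    rw [eq_hub j (f_right j') hadj, eq_hub j' (f_right j) hadj.symm]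
  · exact (KdotK3.adj_right_tip_iff j k').mpr (eq_hub j (tip_notMem k') hadj)
  · exact (not_adj_left_tip i' k hadj.symm).elim
  · exact (KdotK3.adj_tip_right_iff k j').mpr (eq_hub j' (tip_notMem k) hadj.symm)
  · exact (KdotK3.adj_tip_tip_iff k k').mpr fun hk => hadj.ne (hk ▸ rfl)

theorem nonempty_iso_of_specRad_le [Fintype V] [DecidableEq V] (h : IsSubKdotK3 G T g p q) {a b : ℕ}
    {hb : 0 < b} (hb3 : 3 ≤ b) (hba : b ≤ a) (hab : a ≤ b + 1) (hV : Fintype.card V = a + b + 2)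
    (hρ : specRad (KdotK3 a b hb) ≤ specRad G) : Nonempty (G ≃g KdotK3 a b hb) := by
  obtain ⟨t, c, hc, f, ht, G_le⟩ := h.exists_equiv_comap_le
  have card_eq : t + c + 2 = a + b + 2 := by simpa [hV] using Fintype.card_congr f
  have : Nonempty V := ⟨g⟩
  obtain ⟨x, hx⟩ := exists_isPerronVector_specRad G
  obtain ⟨y, hy⟩ := exists_isPerronVector_specRad (KdotK3 t c hc)
  have hxf := hx.comap_equiv f
  have specRad_le := hxf.le_of_le hy (KdotK3.preconnected ht) G_le
  obtain rfl : t = a :=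
    KdotK3.eq_of_specRad_le hb3 hba hab ht (by omega) (hρ.trans specRad_le)
  obtain rfl : c = b := by omega
  rw [specRad_le.antisymm hρ] at hxf
  rw [← hxf.eq_of_le hy (KdotK3.preconnected ht) G_le]
  exact ⟨(Iso.comap f G).symm⟩

end IsSubKdotK3

/-! ### Walks of length two in pentagon-free graphs -/

theorem sum_add_mul_card_le_sum_add_mul_card {α : Type*} {s t : Finset α} (hst : s ⊆ t)
    {f : α → ℕ} {M : ℕ} (hf : ∀ a ∈ t, f a ≤ M) :
    ∑ a ∈ t, f a + M * #s ≤ ∑ a ∈ s, f a + M * #t := by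
  classical
  have sdiff_le : ∑ a ∈ t \ s, f a ≤ #(t \ s) * M :=
    sum_le_card_nsmul _ _ _ fun a ha => hf a (sdiff_subset ha)
  have card_eq := card_sdiff_add_card_eq_card hst
  rw [← sum_sdiff hst, ← card_eq]
  linarith

-- Each edge `vw` satisfies `1 ≤ 1 / deg v + 1 / deg w`, and every vertex `v` of positive degree
-- receives `deg v` of the fractions `1 / deg v`.
theorem sum_degree_le_two_mul_card_of_adj {V : Type*} [Fintype V] (H : SimpleGraph V)
    [DecidableRel H.Adj]
    (hH : ∀ v w, H.Adj v w →
      H.degree v = 1 ∨ H.degree w = 1 ∨ H.degree v ≤ 2 ∧ H.degree w ≤ 2) :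
    ∑ v, H.degree v ≤ 2 * #{v | 0 < H.degree v} := by
  have one_le {v w : V} (h : H.Adj v w) : (1 : ℚ) ≤ (H.degree v : ℚ)⁻¹ + (H.degree w : ℚ)⁻¹ := by
    obtain hv | hw | ⟨hv, hw⟩ := hH v w h
    · simp [hv]
    · simp [hw]
    · have hv_pos : 0 < H.degree v := (H.degree_pos_iff_exists_adj v).mpr ⟨w, h⟩
      have hw_pos : 0 < H.degree w := (H.degree_pos_iff_exists_adj w).mpr ⟨v, h.symm⟩
      interval_cases H.degree v <;> interval_cases H.degree w <;> norm_num
  have sum_inv (v : V) : ∑ _ ∈ H.neighborFinset v, (H.degree v : ℚ)⁻¹ =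
      if 0 < H.degree v then 1 else 0 := by
    split_ifs with hv
    · simp [hv.ne']
    · simp [Nat.eq_zero_of_not_pos hv]
  have sum_inv' : ∑ v, ∑ w ∈ H.neighborFinset v, (H.degree w : ℚ)⁻¹ =
      ∑ v, ∑ _ ∈ H.neighborFinset v, (H.degree v : ℚ)⁻¹ :=
    sum_comm' fun v w => by simp [adj_comm]
  suffices (∑ v, H.degree v : ℚ) ≤ 2 * #{v | 0 < H.degree v} by exact_mod_cast this
  calc (∑ v, H.degree v : ℚ) = ∑ v, ∑ w ∈ H.neighborFinset v, 1 := by simp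
    _ ≤ ∑ v, ∑ w ∈ H.neighborFinset v, ((H.degree v : ℚ)⁻¹ + (H.degree w : ℚ)⁻¹) := by
      gcongr with v _ w hw
      exact one_le ((mem_neighborFinset ..).mp hw)
    _ = 2 * ∑ v, ∑ _ ∈ H.neighborFinset v, (H.degree v : ℚ)⁻¹ := by
      simp only [sum_add_distrib, sum_inv', two_mul]
    _ = 2 * #{v | 0 < H.degree v} := by simp only [sum_inv, sum_boole]

theorem not_adj_of_free_cycleGraph_five {V : Type*} {G : SimpleGraph V}
    (hG : (cycleGraph 5).Free G) {a b c d e : V}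
    (hab : G.Adj a b) (hbc : G.Adj b c) (hcd : G.Adj c d) (hde : G.Adj d e) (hac : a ≠ c)
    (had : a ≠ d) (hbd : b ≠ d) (hbe : b ≠ e) (hce : c ≠ e) : ¬ G.Adj e a := by
  intro hea
  let c : G.Walk a a := .cons hab (.cons hbc (.cons hcd (.cons hde (.cons hea .nil))))
  refine hG ((cycleGraph_isContained_iff (by norm_num)).mpr ⟨a, c, ?_, rfl⟩)
  simp [c, Walk.cons_isCycle_iff, Walk.isPath_def, hab.ne, hbc.ne, hcd.ne, hde.ne, hea.ne, hab.ne',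
    hac, had, hbd, hbe, hce, hac.symm, had.symm, hea.ne']

section Codegree

variable {V : Type*}

/-- The link of `u` in `G`: the subgraph of `G` induced on the neighbourhood of `u`, as a graph on
all vertices. -/
def link (G : SimpleGraph V) (u : V) : SimpleGraph V where
  Adj v w := G.Adj u v ∧ G.Adj u w ∧ G.Adj v w
  symm := ⟨fun _ _ h => ⟨h.2.1, h.1, h.2.2.symm⟩⟩
  loopless := ⟨fun _ h => h.2.2.ne rfl⟩

variable {G : SimpleGraph V} {u v w : V}

theorem link_adj : (link G u).Adj v w ↔ G.Adj u v ∧ G.Adj u w ∧ G.Adj v w := Iff.rfl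

instance [DecidableRel G.Adj] : DecidableRel (link G u).Adj :=
  fun _ _ => decidable_of_iff' _ link_adj

theorem commonNeighbor_eq_of_adj (hG : (cycleGraph 5).Free G) (hw : Gᶜ.Adj u w) (hv : Gᶜ.Adj u v)
    (hvw : G.Adj v w) {a b : V} (hua : G.Adj u a) (hva : G.Adj v a) (hub : G.Adj u b)
    (hwb : G.Adj w b) : a = b := by
  by_contra hab
  exact not_adj_of_free_cycleGraph_five hG hua hva.symm hvw hwb hv.ne hw.ne
    (fun h => hw.2 (h ▸ hua)) hab (fun h => hv.2 (h ▸ hub)) hub.symm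

variable [Fintype V] [DecidableRel G.Adj]

variable (G) in
/-- The vertices lying in a triangle with `u`, that is, the support of the link of `u`. -/
def linkSupport (u : V) : Finset V := {v | 0 < (link G u).degree v}

theorem mem_linkSupport : v ∈ linkSupport G u ↔ ∃ w, (link G u).Adj v w := by
  simp [linkSupport, degree_pos_iff_exists_adj]

theorem linkSupport_subset : linkSupport G u ⊆ G.neighborFinset u := fun v hv => by
  obtain ⟨w, hvw⟩ := mem_linkSupport.mp hv
  exact (mem_neighborFinset ..).mpr hvw.1

theorem not_adj_of_linkSupport_eq_empty (hu : linkSupport G u = ∅) (hv : G.Adj u v)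
    (hw : G.Adj u w) : ¬ G.Adj v w := fun hvw =>
  notMem_empty v (hu ▸ mem_linkSupport.mpr ⟨w, hv, hw, hvw⟩)

theorem two_le_card_linkSupport (hu : (linkSupport G u).Nonempty) : 2 ≤ #(linkSupport G u) := by
  obtain ⟨v, hv⟩ := hu
  obtain ⟨w, hvw⟩ := mem_linkSupport.mp hv
  exact one_lt_card.mpr ⟨v, hv, w, mem_linkSupport.mpr ⟨v, hvw.symm⟩, hvw.ne⟩

theorem link_degree_le_two_of_adj (hG : (cycleGraph 5).Free G) (hvw : (link G u).Adj v w)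
    (hw : 1 < (link G u).degree w) : (link G u).degree v ≤ 2 := by
  classical
  obtain ⟨y, hwy, y_ne_v⟩ := exists_mem_ne hw v
  rw [mem_neighborFinset] at hwy
  refine (card_le_card fun x hvx => ?_).trans (card_le_two (a := w) (b := y))
  rw [mem_neighborFinset] at hvx
  by_contra hx
  simp only [mem_insert, mem_singleton, not_or] at hx
  exact not_adj_of_free_cycleGraph_five hG hvx.2.1 hvx.2.2.symm hvw.2.2 hwy.2.2 hvw.1.ne hvw.2.1.ne
    hx.1 hx.2 y_ne_v.symm hwy.2.1.symm

theorem sum_link_degree_le (hG : (cycleGraph 5).Free G) :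
    ∑ v, (link G u).degree v ≤ 2 * #(linkSupport G u) := by
  refine sum_degree_le_two_mul_card_of_adj _ fun v w hvw => ?_
  have hv_pos := ((link G u).degree_pos_iff_exists_adj v).mpr ⟨w, hvw⟩
  have hw_pos := ((link G u).degree_pos_iff_exists_adj w).mpr ⟨v, hvw.symm⟩
  have hv := link_degree_le_two_of_adj hG hvw
  have hw := link_degree_le_two_of_adj hG hvw.symm
  omega

variable [DecidableEq V]

variable (G) in
/-- The number of common neighbours of `v` and `w`, that is, of walks of length two from `v` to
`w`. -/
def codegree (v w : V) : ℕ := #(G.neighborFinset v ∩ G.neighborFinset w)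

theorem codegree_pos_iff : 0 < codegree G v w ↔ ∃ a, G.Adj v a ∧ G.Adj w a := by
  simp [codegree, card_pos, Finset.Nonempty]

theorem codegree_le_card {s : Finset V} (hs : ∀ a, G.Adj v a → G.Adj w a → a ∈ s) :
    codegree G v w ≤ #s :=
  card_le_card fun a ha => by
    simp only [mem_inter, mem_neighborFinset] at ha
    exact hs a ha.1 ha.2

theorem codegree_le_degree : codegree G v w ≤ G.degree v := card_le_card inter_subset_left

theorem adjMatrix_mul_self_apply : (G.adjMatrix ℝ * G.adjMatrix ℝ) v w = codegree G v w := by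
  simp [mul_apply, adjMatrix_apply, codegree, ← ite_and, ← filter_and, G.adj_comm _ w,
    neighborFinset_eq_filter, and_comm]

theorem link_degree_eq_codegree (hv : G.Adj u v) : (link G u).degree v = codegree G u v := by
  rw [← card_neighborFinset_eq_degree, codegree]
  congr 1
  ext w
  simp [link_adj, hv]

theorem sum_codegree_neighborFinset :
    ∑ v ∈ G.neighborFinset u, codegree G u v = ∑ v, (link G u).degree v := by
  rw [← sum_congr rfl fun v hv => link_degree_eq_codegree ((mem_neighborFinset ..).mp hv)]
  refine sum_subset (subset_univ _) fun v _ hv => ?_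
  rw [mem_neighborFinset] at hv
  exact (degree_eq_zero _ _).mpr fun w h => hv h.1

theorem sum_codegree_eq : ∑ w, codegree G u w = G.degree u + ∑ v, (link G u).degree v +
    ∑ w ∈ Gᶜ.neighborFinset u, codegree G u w := by
  have codegree_self : codegree G u u = G.degree u := by simp [codegree]
  rw [← sum_codegree_neighborFinset, neighborFinset_compl, sdiff_singleton_eq_erase,
    ← sum_add_sum_compl (G.neighborFinset u), ← add_sum_erase (G.neighborFinset u)ᶜ _ (a := u)
    (by simp), codegree_self]
  ring

theorem IsPerronVector.exists_sq_le_sum_codegree {r : ℝ} {x : V → ℝ} (hx : IsPerronVector G r x) :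
    ∃ u, r ^ 2 ≤ ∑ w, codegree G u w := by
  have mulVec_eq : G.adjMatrix ℝ *ᵥ x = r • x := by convert hx.mulVec_eq
  obtain ⟨u, hu⟩ := exists_eigenvalue_le_row_sum (A := G.adjMatrix ℝ * G.adjMatrix ℝ) (r := r ^ 2)
    (fun v w => by rw [adjMatrix_mul_self_apply]; positivity) hx.nonneg hx.ne_zero
    (by rw [← mulVec_mulVec, mulVec_eq, mulVec_smul, mulVec_eq, smul_smul, sq])
  exact ⟨u, by simpa only [adjMatrix_mul_self_apply, Nat.cast_sum] using hu⟩

theorem codegree_le_one_of_adj (hG : (cycleGraph 5).Free G) (hv : Gᶜ.Adj u v) (hw : Gᶜ.Adj u w)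
    (hvw : G.Adj v w) (hw_pos : 0 < codegree G u w) : codegree G u v ≤ 1 := by
  obtain ⟨b, hub, hwb⟩ := codegree_pos_iff.mp hw_pos
  refine codegree_le_card (s := {b}) fun a hua hva => ?_
  exact mem_singleton.mpr (commonNeighbor_eq_of_adj hG hw hv hvw hua hva hub hwb)

theorem codegree_le_two_of_link_adj (hG : (cycleGraph 5).Free G) (hw : Gᶜ.Adj u w) {b c : V}
    (hbc : (link G u).Adj b c) (hwb : G.Adj w b) : codegree G u w ≤ 2 := by
  refine (codegree_le_card (s := {b, c}) fun a hua hwa => ?_).trans card_le_two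
  by_contra ha
  simp only [mem_insert, mem_singleton, not_or] at ha
  exact not_adj_of_free_cycleGraph_five hG hbc.2.1 hbc.2.2.symm hwb.symm hwa hbc.1.ne hw.ne
    (fun h => hw.2 (h ▸ hbc.2.1)) (Ne.symm ha.2) (Ne.symm ha.1) hua.symm

end Codegree

-- In lemma names, a far vertex is one adjacent to `u` in `Gᶜ`; the hypothesis `hS` is the lower
-- bound on the number of walks of length two from `u` that the spectral radius provides.
section PentagonFree

variable {V : Type*} [Fintype V] [DecidableEq V] {G : SimpleGraph V} [DecidableRel G.Adj] {u : V}
  {m : ℕ}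

theorem degree_add_degree_compl (G : SimpleGraph V) [DecidableRel G.Adj] (u : V) :
    G.degree u + Gᶜ.degree u + 1 = Fintype.card V := by
  have := G.degree_lt_card_verts u
  rw [degree_compl]
  omega

theorem sum_codegree_add_mul_card_le (hG : (cycleGraph 5).Free G) {M : ℕ}
    (hM : ∀ w, Gᶜ.Adj u w → codegree G u w ≤ M) {s : Finset V} (hs : ∀ w ∈ s, Gᶜ.Adj u w) :
    ∑ w, codegree G u w + M * #s ≤
      G.degree u + 2 * #(linkSupport G u) + ∑ w ∈ s, codegree G u w + M * Gᶜ.degree u := by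
  have link_le := sum_link_degree_le (u := u) hG
  have far_le := sum_add_mul_card_le_sum_add_mul_card
    (fun w hw => (mem_neighborFinset ..).mpr (hs w hw))
    fun w hw => hM w ((mem_neighborFinset ..).mp hw)
  rw [card_neighborFinset_eq_degree] at far_le
  rw [sum_codegree_eq]
  omega

theorem colorable_two_of_linkSupport_eq_empty (hlink : linkSupport G u = ∅)
    (h : ∀ v w, Gᶜ.Adj u v → Gᶜ.Adj u w → G.Adj v w →
      (0 < codegree G u v ↔ ¬ 0 < codegree G u w)) : G.Colorable 2 := by
  let P (v : V) : Prop := v = u ∨ 0 < codegree G u v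
  have near {v w : V} (huv : G.Adj u v) (hvw : G.Adj v w) : ¬ P v ∧ P w := by
    refine ⟨?_, ?_⟩
    · rintro (rfl | hv)
      · exact huv.ne rfl
      · obtain ⟨a, hua, hva⟩ := codegree_pos_iff.mp hv
        exact not_adj_of_linkSupport_eq_empty hlink huv hua hva
    · exact or_iff_not_imp_left.mpr fun _ => codegree_pos_iff.mpr ⟨v, huv, hvw.symm⟩
  refine (Coloring.mk (fun v => decide (P v)) fun {v w} hvw => ?_).colorable
  by_cases huv : G.Adj u v
  · simp [near huv hvw]
  by_cases huw : G.Adj u w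
  · simp [near huw hvw.symm]
  have v_ne : v ≠ u := by rintro rfl; exact huw hvw
  have w_ne : w ≠ u := by rintro rfl; exact huv hvw.symm
  have := h v w ⟨v_ne.symm, huv⟩ ⟨w_ne.symm, huw⟩ hvw
  rw [Ne, decide_eq_decide]
  simp only [P, v_ne, w_ne, false_or]
  tauto

theorem codegree_pos_of_far_adj (hG : (cycleGraph 5).Free G) (hu : linkSupport G u = ∅)
    (hm : Fintype.card V = m + 2) (hS : m ^ 2 < 4 * ∑ w, codegree G u w) {v w : V}
    (hv : Gᶜ.Adj u v) (hw : Gᶜ.Adj u w) (hvw : G.Adj v w) :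
    0 < codegree G u v ∨ 0 < codegree G u w := by
  by_contra! hzero
  have count := sum_codegree_add_mul_card_le (u := u) hG (s := {v, w})
    (fun _ _ => codegree_le_degree) (by simp only [mem_insert, mem_singleton]; grind)
  have card_eq := degree_add_degree_compl G u
  rw [sum_pair hvw.ne, card_pair hvw.ne, hu, card_empty] at count
  zify at *
  nlinarith [sq_nonneg ((G.degree u : ℤ) - (Gᶜ.degree u - 1))]

theorem two_le_codegree_of_far_edge (hG : (cycleGraph 5).Free G) (hu : linkSupport G u = ∅)
    (hm : Fintype.card V = m + 2) (hm7 : 7 ≤ m) (hS : m ^ 2 < 4 * ∑ w, codegree G u w) {p q v : V}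
    (hp : Gᶜ.Adj u p) (hq : Gᶜ.Adj u q) (hpq : G.Adj p q) (hp_pos : 0 < codegree G u p)
    (hq_pos : 0 < codegree G u q) (hv : Gᶜ.Adj u v) (hvp : v ≠ p) (hvq : v ≠ q) :
    2 ≤ codegree G u v := by
  by_contra! hv_lt
  have hp_le := codegree_le_one_of_adj hG hp hq hpq hq_pos
  have hq_le := codegree_le_one_of_adj hG hq hp hpq.symm hp_pos
  have count := sum_codegree_add_mul_card_le (u := u) hG (s := {v, p, q})
    (fun _ _ => codegree_le_degree) (by simp only [mem_insert, mem_singleton]; grind)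
  have card_eq := degree_add_degree_compl G u
  rw [sum_insert (by simp [hvp, hvq]), sum_pair hpq.ne,
    card_eq_three.mpr ⟨v, p, q, hvp, hvq, hpq.ne, rfl⟩, hu, card_empty] at count
  zify at *
  nlinarith [sq_nonneg ((G.degree u : ℤ) - (Gᶜ.degree u - 2))]

theorem not_adj_of_far_edge (hG : (cycleGraph 5).Free G) (hu : linkSupport G u = ∅)
    (hm : Fintype.card V = m + 2) (hm7 : 7 ≤ m) (hS : m ^ 2 < 4 * ∑ w, codegree G u w) {p q v w : V}
    (hp : Gᶜ.Adj u p) (hq : Gᶜ.Adj u q) (hpq : G.Adj p q) (hp_pos : 0 < codegree G u p)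
    (hq_pos : 0 < codegree G u q) (huv : ¬ G.Adj u v) (hvp : v ≠ p) (hvq : v ≠ q)
    (huw : ¬ G.Adj u w) : ¬ G.Adj v w := fun hvw => by
  have hv : Gᶜ.Adj u v := ⟨by rintro rfl; exact huw hvw, huv⟩
  have hw : Gᶜ.Adj u w := ⟨by rintro rfl; exact huv hvw.symm, huw⟩
  have two_le {x : V} :=
    two_le_codegree_of_far_edge (v := x) hG hu hm hm7 hS hp hq hpq hp_pos hq_pos
  have hw_pos : 0 < codegree G u w := by
    obtain rfl | hwp := eq_or_ne w p
    · exact hp_pos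
    obtain rfl | hwq := eq_or_ne w q
    · exact hq_pos
    · exact two_pos.trans_le (two_le hw hwp hwq)
  have hv_le := codegree_le_one_of_adj hG hv hw hvw hw_pos
  have hv_ge := two_le hv hvp hvq
  omega

theorem exists_isSubKdotK3_of_far_edge (hG : (cycleGraph 5).Free G) (hu : linkSupport G u = ∅)
    (hm : Fintype.card V = m + 2) (hm7 : 7 ≤ m) (hS : m ^ 2 < 4 * ∑ w, codegree G u w) {p q : V}
    (hp : Gᶜ.Adj u p) (hq : Gᶜ.Adj u q) (hpq : G.Adj p q) (hp_pos : 0 < codegree G u p)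
    (hq_pos : 0 < codegree G u q) :
    ∃ T g p q, IsSubKdotK3 G T g p q := by
  obtain ⟨g, hug, hpg⟩ := codegree_pos_iff.mp hp_pos
  obtain ⟨g', hug', hqg'⟩ := codegree_pos_iff.mp hq_pos
  obtain rfl := commonNeighbor_eq_of_adj hG hq hp hpq hug hpg hug' hqg'
  let T : Finset V := {v | ¬ G.Adj u v ∧ v ≠ p ∧ v ≠ q}
  have mem_T (v : V) : v ∈ T ↔ ¬ G.Adj u v ∧ v ≠ p ∧ v ≠ q := by simp [T]
  have eq_of_adj (v : V) (hv : v ∉ T) (w : V) (hw : w ∉ T) (hvw : G.Adj v w) :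
      v = g ∨ v = p ∨ v = q := by
    rw [mem_T] at hv hw
    by_contra! hne
    have huv : G.Adj u v := by tauto
    have huw : ¬ G.Adj u w := fun huw => not_adj_of_linkSupport_eq_empty hu huv huw hvw
    obtain rfl | rfl : w = p ∨ w = q := by tauto
    · exact hne.1 (commonNeighbor_eq_of_adj hG hq hp hpq huv hvw.symm hug' hqg')
    · exact hne.1 (commonNeighbor_eq_of_adj hG hq hp hpq hug hpg huv hvw.symm).symm
  have not_adj_far {v w : V} (hv : v ∈ T) (huw : ¬ G.Adj u w) : ¬ G.Adj v w := by
    obtain ⟨huv, hvp, hvq⟩ := (mem_T v).mp hv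
    exact not_adj_of_far_edge hG hu hm hm7 hS hp hq hpq hp_pos hq_pos huv hvp hvq huw
  exact ⟨T, g, p, q, {
    nonempty := ⟨u, (mem_T u).mpr ⟨G.irrefl, hp.ne, hq.ne⟩⟩
    hub_notMem := fun h => ((mem_T g).mp h).1 hug
    tip₁_notMem := fun h => ((mem_T p).mp h).2.1 rfl
    tip₂_notMem := fun h => ((mem_T q).mp h).2.2 rfl
    hub_ne_tip₁ := hpg.ne'
    hub_ne_tip₂ := hqg'.ne'
    tip₁_ne_tip₂ := hpq.ne
    not_adj := fun v hv w hw => not_adj_far hv ((mem_T w).mp hw).1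
    not_adj_tip₁ := fun v hv => not_adj_far hv hp.2
    not_adj_tip₂ := fun v hv => not_adj_far hv hq.2
    eq_of_adj }⟩

theorem exists_isSubKdotK3_of_linkSupport_eq_empty (hG : (cycleGraph 5).Free G)
    (hu : linkSupport G u = ∅) (hm : Fintype.card V = m + 2) (hm7 : 7 ≤ m)
    (hS : m ^ 2 < 4 * ∑ w, codegree G u w) (hnb : ¬ G.Colorable 2) :
    ∃ T g p q, IsSubKdotK3 G T g p q := by
  by_contra hsub
  refine hnb (colorable_two_of_linkSupport_eq_empty hu fun v w hv hw hvw => ?_)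
  have at_least_one := codegree_pos_of_far_adj hG hu hm hS hv hw hvw
  have not_both (hv_pos : 0 < codegree G u v) : ¬ 0 < codegree G u w := fun hw_pos =>
    hsub (exists_isSubKdotK3_of_far_edge hG hu hm hm7 hS hv hw hvw hv_pos hw_pos)
  tauto

theorem codegree_le_max_of_far (hG : (cycleGraph 5).Free G) {w : V} (hw : Gᶜ.Adj u w) :
    codegree G u w ≤ max 2 #(G.neighborFinset u \ linkSupport G u) := by
  by_cases touches : ∃ b ∈ linkSupport G u, G.Adj w b
  · obtain ⟨b, hb, hwb⟩ := touches
    obtain ⟨c, hbc⟩ := mem_linkSupport.mp hb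
    exact le_max_of_le_left (codegree_le_two_of_link_adj hG hw hbc hwb)
  · refine le_max_of_le_right (codegree_le_card fun a hua hwa => ?_)
    exact mem_sdiff.mpr ⟨(mem_neighborFinset ..).mpr hua, fun ha => touches ⟨a, ha, hwa⟩⟩

theorem card_sdiff_linkSupport_add :
    #(G.neighborFinset u \ linkSupport G u) + #(linkSupport G u) = G.degree u :=
  card_sdiff_add_card_eq_card linkSupport_subset

theorem three_le_card_sdiff_linkSupport (hG : (cycleGraph 5).Free G)
    (hm : Fintype.card V = m + 2) (hm13 : 13 ≤ m) (hS : m ^ 2 < 4 * ∑ w, codegree G u w) :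
    3 ≤ #(G.neighborFinset u \ linkSupport G u) := by
  by_contra! hlt
  have count := sum_codegree_add_mul_card_le (u := u) hG (M := 2) (s := ∅)
    (fun w hw => (codegree_le_max_of_far hG hw).trans (by omega)) (by simp)
  have card_eq := degree_add_degree_compl G u
  have degree_eq := card_sdiff_linkSupport_add (G := G) (u := u)
  simp only [card_empty, sum_empty] at count
  nlinarith

theorem card_linkSupport_eq_two (hG : (cycleGraph 5).Free G) (hu : (linkSupport G u).Nonempty)
    (hm : Fintype.card V = m + 2) (hm19 : 19 ≤ m) (hS : m ^ 2 < 4 * ∑ w, codegree G u w) :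
    #(linkSupport G u) = 2 := by
  by_contra hne
  have two_le := two_le_card_linkSupport hu
  have three_le := three_le_card_sdiff_linkSupport hG hm (by omega) hS
  have count := sum_codegree_add_mul_card_le (u := u) hG
    (s := ∅) (fun w hw => codegree_le_max_of_far hG hw) (by simp)
  have card_eq := degree_add_degree_compl G u
  have degree_eq := card_sdiff_linkSupport_add (G := G) (u := u)
  rw [max_eq_right (by omega), card_empty, sum_empty] at count
  have three_le' : 3 ≤ #(linkSupport G u) := by omega
  set t := #(G.neighborFinset u \ linkSupport G u)
  set s := #(linkSupport G u)
  zify at *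
  -- The count is at most `t (m - 1 - t) + 9 - (t - 3) (s - 3) ≤ (m - 1)² / 4 + 9`.
  nlinarith [mul_nonneg (sub_nonneg.mpr three_le) (sub_nonneg.mpr three_le'),
    sq_nonneg (2 * (t : ℤ) - (m - 1))]

theorem three_le_codegree_of_far (hG : (cycleGraph 5).Free G) (hu : (linkSupport G u).Nonempty)
    (hm : Fintype.card V = m + 2) (hm19 : 19 ≤ m) (hS : m ^ 2 < 4 * ∑ w, codegree G u w) {w : V}
    (hw : Gᶜ.Adj u w) : 3 ≤ codegree G u w := by
  by_contra! hlt
  have card_support := card_linkSupport_eq_two hG hu hm hm19 hS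
  have three_le := three_le_card_sdiff_linkSupport hG hm (by omega) hS
  have count := sum_codegree_add_mul_card_le (u := u) hG (s := {w})
    (fun w hw => codegree_le_max_of_far hG hw) (by simpa using hw)
  have card_eq := degree_add_degree_compl G u
  have degree_eq := card_sdiff_linkSupport_add (G := G) (u := u)
  rw [max_eq_right (by omega), card_singleton, sum_singleton] at count
  set t := #(G.neighborFinset u \ linkSupport G u)
  zify at *
  nlinarith [sq_nonneg (2 * (t : ℤ) - (m - 1))]

theorem not_adj_of_far (hG : (cycleGraph 5).Free G) (hu : (linkSupport G u).Nonempty)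
    (hm : Fintype.card V = m + 2) (hm19 : 19 ≤ m) (hS : m ^ 2 < 4 * ∑ w, codegree G u w) {v w : V}
    (hv : Gᶜ.Adj u v) (hw : Gᶜ.Adj u w) : ¬ G.Adj v w := fun hvw => by
  have hv_three := three_le_codegree_of_far hG hu hm hm19 hS hv
  have hw_three := three_le_codegree_of_far hG hu hm hm19 hS hw
  have hv_one := codegree_le_one_of_adj hG hv hw hvw (by omega)
  omega

theorem not_adj_of_far_of_mem_linkSupport (hG : (cycleGraph 5).Free G)
    (hm : Fintype.card V = m + 2) (hm19 : 19 ≤ m) (hS : m ^ 2 < 4 * ∑ w, codegree G u w) {v w : V}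
    (hv : Gᶜ.Adj u v) (hw : w ∈ linkSupport G u) : ¬ G.Adj v w := fun hvw => by
  obtain ⟨c, hwc⟩ := mem_linkSupport.mp hw
  have hv_two := codegree_le_two_of_link_adj hG hv hwc hvw
  have hv_three := three_le_codegree_of_far hG ⟨w, hw⟩ hm hm19 hS hv
  omega

theorem exists_isSubKdotK3_of_linkSupport_nonempty (hG : (cycleGraph 5).Free G)
    (hu : (linkSupport G u).Nonempty) (hm : Fintype.card V = m + 2) (hm19 : 19 ≤ m)
    (hS : m ^ 2 < 4 * ∑ w, codegree G u w) : ∃ T g p q, IsSubKdotK3 G T g p q := by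
  obtain ⟨p, q, hpq, support_eq⟩ := card_eq_two.mp (card_linkSupport_eq_two hG hu hm hm19 hS)
  have mem_support (v : V) : v ∈ linkSupport G u ↔ v = p ∨ v = q := by simp [support_eq]
  let T := G.neighborFinset u \ linkSupport G u
  have mem_T (v : V) : v ∈ T ↔ G.Adj u v ∧ v ≠ p ∧ v ≠ q := by simp [T, support_eq]
  have T_nonempty : T.Nonempty := card_pos.mp
    (three_pos.trans_le (three_le_card_sdiff_linkSupport hG hm (by omega) hS))
  have near_p : G.Adj u p := (mem_neighborFinset ..).mp (linkSupport_subset (by simp [support_eq]))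
  have near_q : G.Adj u q := (mem_neighborFinset ..).mp (linkSupport_subset (by simp [support_eq]))
  have not_adj_near {v w : V} (hv : v ∈ T) (huw : G.Adj u w) : ¬ G.Adj v w := fun hvw =>
    (mem_sdiff.mp hv).2 (mem_linkSupport.mpr ⟨w, ((mem_T v).mp hv).1, huw, hvw⟩)
  have eq_of_adj (v : V) (hv : v ∉ T) (w : V) (hw : w ∉ T) (hvw : G.Adj v w) :
      v = u ∨ v = p ∨ v = q := by
    rw [mem_T] at hv hw
    by_contra! hne
    have far_v : Gᶜ.Adj u v := ⟨hne.1.symm, by tauto⟩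
    have hw_support : ¬ (w = p ∨ w = q) := fun h =>
      not_adj_of_far_of_mem_linkSupport hG hm hm19 hS far_v ((mem_support w).mpr h) hvw
    have hwu : u ≠ w := by rintro rfl; exact far_v.2 hvw.symm
    exact not_adj_of_far hG hu hm hm19 hS far_v ⟨hwu, by tauto⟩ hvw
  exact ⟨T, u, p, q, {
    nonempty := T_nonempty
    hub_notMem := fun h => ((mem_T u).mp h).1.ne rfl
    tip₁_notMem := fun h => ((mem_T p).mp h).2.1 rfl
    tip₂_notMem := fun h => ((mem_T q).mp h).2.2 rfl
    hub_ne_tip₁ := near_p.ne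
    hub_ne_tip₂ := near_q.ne
    tip₁_ne_tip₂ := hpq
    not_adj := fun v hv w hw => not_adj_near hv ((mem_T w).mp hw).1
    not_adj_tip₁ := fun v hv => not_adj_near hv near_p
    not_adj_tip₂ := fun v hv => not_adj_near hv near_q
    eq_of_adj }⟩

theorem exists_isSubKdotK3 (hG : (cycleGraph 5).Free G) (hm : Fintype.card V = m + 2)
    (hm19 : 19 ≤ m) (hS : m ^ 2 < 4 * ∑ w, codegree G u w) (hnb : ¬ G.Colorable 2) :
    ∃ T g p q, IsSubKdotK3 G T g p q := by
  obtain hu | hu := (linkSupport G u).eq_empty_or_nonempty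
  · exact exists_isSubKdotK3_of_linkSupport_eq_empty hG hu hm (by omega) hS hnb
  · exact exists_isSubKdotK3_of_linkSupport_nonempty hG hu hm hm19 hS

end PentagonFree

theorem sq_add_lt_four_mul {a b S : ℕ} (hba : b ≤ a) (hab : a ≤ b + 1) (hS : a * b < S) :
    (a + b) ^ 2 < 4 * S := by
  obtain rfl | rfl : a = b ∨ a = b + 1 := by omega
  all_goals nlinarith

theorem stmt13_general {V : Type*} [Fintype V] [DecidableEq V] {a b : ℕ} {hb : 0 < b}
    (hba : b ≤ a) (hab : a ≤ b + 1) (hab19 : 19 ≤ a + b) (hV : Fintype.card V = a + b + 2)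
    (G : SimpleGraph V) (hnb : ¬ G.Colorable 2) (hρ : specRad (KdotK3 a b hb) ≤ specRad G) :
    (∃ (v : V) (c : G.Walk v v), c.IsCycle ∧ c.length = 5) ∨
    Nonempty (G ≃g KdotK3 a b hb) := by
  classical
  rw [← cycleGraph_isContained_iff (by norm_num), or_iff_not_imp_left]
  intro (hG : (cycleGraph 5).Free G)
  have ha : 0 < a := hb.trans_le hba
  have : Nonempty V := Fintype.card_pos_iff.mp (by omega)
  obtain ⟨x, hx⟩ := exists_isPerronVector_specRad G
  obtain ⟨u, hu⟩ := hx.exists_sq_le_sum_codegree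
  have hS : a * b < ∑ w, codegree G u w := by
    have specRad_pos := one_pos.trans (KdotK3.one_lt_specRad (hb := hb) ha)
    have sq_le : specRad (KdotK3 a b hb) ^ 2 ≤ specRad G ^ 2 := by gcongr
    exact_mod_cast ((KdotK3.mul_lt_specRad_sq ha).trans_le sq_le).trans_le hu
  obtain ⟨T, g, p, q, hsub⟩ :=
    exists_isSubKdotK3 hG hV hab19 (sq_add_lt_four_mul hba hab hS) hnb
  exact hsub.nonempty_iso_of_specRad_le (by omega) hba hab hV hρ

/-- Guo–Lin–Zhao: a non-bipartite graph of order `n ≥ 21` with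
`ρ(G) ≥ ρ(K_{⌈(n−2)/2⌉,⌊(n−2)/2⌋} • K₃)` contains a pentagon unless it is
`K_{⌈(n−2)/2⌉,⌊(n−2)/2⌋} • K₃` itself. -/
theorem stmt13 (n : ℕ) (hn : 21 ≤ n) (G : SimpleGraph (Fin n)) (hnb : ¬ G.Colorable 2)
    (hρ : specRad (KdotK3 ((n - 1) / 2) ((n - 2) / 2) (by omega)) ≤ specRad G) :
    (∃ (v : Fin n) (c : G.Walk v v), c.IsCycle ∧ c.length = 5) ∨
    Nonempty (G ≃g KdotK3 ((n - 1) / 2) ((n - 2) / 2) (by omega)) :=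
  stmt13_general (by omega) (by omega) (by omega) (by rw [Fintype.card_fin]; omega) G hnb hρ
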